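/- arXiv:2112.11863 — 2 statements merged into one kernel-verified Lean document; each statement's English description precedes it below -/
import Mathlib

section
/- Let ν, a0, a1, a2, a3, a4 be real parameters. Define X(x) = a0 + a1*x + a2*x^2 + a3*x^3 + a4*x^4, Y(y) = a0 + a1*y + a2*y^2 + a3*y^3 + a4*y^4, F(x,y) = X(x)*y^2 - x^2*Y(y), G(x,y) = X(x)*(a0*ν^2 + 2*a3*ν*y^3 - a4*y^4 + 2*a4*ν*y^4) + (a0 - 2*a0*ν - 2*a1*ν*x - a4*ν^2*x^4)*Y(y), and H(x,y) = (ν*x + y)*((ν*x - y)*(a1 - a3*x*y) - 2*(1-ν)*(a0 - a4*x^2*y^2)). Then on the open set where F ≠ 0, x ≠ y and Y ≠ 0, one has ∂/∂x [ G(x,y)*y/(F(x,y)*Y(y)) + H(x,y)*x/(F(x,y)*(x-y)) ] = -2*(1-ν)*(ν*x+y)/(x-y)^3. -/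
/-- The quartic metric function `X` (also giving `Y` when evaluated at `y`). -/
def Xq (a0 a1 a2 a3 a4 t : ℝ) : ℝ := a0 + a1*t + a2*t^2 + a3*t^3 + a4*t^4

/-- The Chen-Teo metric function `F`. -/
def Fq (a0 a1 a2 a3 a4 x y : ℝ) : ℝ :=
  Xq a0 a1 a2 a3 a4 x * y^2 - x^2 * Xq a0 a1 a2 a3 a4 y

/-- The Chen-Teo metric function `G`. -/
def Gq (ν a0 a1 a2 a3 a4 x y : ℝ) : ℝ :=
  Xq a0 a1 a2 a3 a4 x * (a0*ν^2 + 2*a3*ν*y^3 - a4*y^4 + 2*a4*ν*y^4)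
    + (a0 - 2*a0*ν - 2*a1*ν*x - a4*ν^2*x^4) * Xq a0 a1 a2 a3 a4 y

/-- The Chen-Teo metric function `H`. -/
def Hq (ν a0 a1 a3 a4 x y : ℝ) : ℝ :=
  (ν*x + y)*((ν*x - y)*(a1 - a3*x*y) - 2*(1 - ν)*(a0 - a4*x^2*y^2))

/-!
Modulo `F`, the product `G * y` is a multiple `Y * R` of `Y`, so the `G`-term splits into a function
of `y` alone and the fraction `R / F`. Together with the `H`-term, the latter becomes
`(R * (x - y) + H * x) / (F * (x - y))`. The cofactor of `x - y` in `F` divides this numerator,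
leaving a fraction with linear numerator and denominator `(x - y)^2`, whose derivative is explicit.
-/

section ChenTeo

variable (ν a0 a1 a2 a3 a4 x y : ℝ)

/-- The cofactor of `y - x` in `Fq`. It does not involve `a2`, whose contributions to the two
products in `Fq` cancel. -/
def FqCofactor : ℝ := (x + y)*(a0 - a4*x^2*y^2) + x*y*(a1 - a3*x*y)

/-- The coefficient of `F` when `G * y` is written as a combination of `F` and `Y`; divided by `Y`,
it is the part of the Chen-Teo combination that is constant in `x`. -/
def GqQuotient : ℝ :=
  2*a3*ν*y^2 + (2*ν - 1)*a4*y^3 - ν^2*(a1 + a2*y + a3*y^2 + a4*y^3)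

/-- The coefficient of `Y` when `G * y` is written as a combination of `F` and `Y`, arranged in the
factors `a0 - a4*x^2*y^2` and `a1 - a3*x*y` that also occur in `Hq` and `FqCofactor`. -/
def GqRemainder : ℝ :=
  (1 - ν)^2*y*(a0 - a4*x^2*y^2) - ν*x*(ν*x + (2 - ν)*y)*(a1 - a3*x*y)

theorem Fq_eq_sub_mul_cofactor :
    Fq a0 a1 a2 a3 a4 x y = (y - x) * FqCofactor a0 a1 a3 a4 x y := by
  simp only [Fq, Xq, FqCofactor]
  ring

theorem Gq_mul_eq_quotient_add_remainder :
    Gq ν a0 a1 a2 a3 a4 x y * y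
      = Fq a0 a1 a2 a3 a4 x y * GqQuotient ν a1 a2 a3 a4 y
        + Xq a0 a1 a2 a3 a4 y * GqRemainder ν a0 a1 a3 a4 x y := by
  -- The coefficient of `X` in `G` has the same constant term as `ν^2 * Y`, so they differ by a
  -- multiple of `y`; this allows `X * y^2` to be traded for `F + x^2 * Y`.
  have hcoeff : a0*ν^2 + 2*a3*ν*y^3 - a4*y^4 + 2*a4*ν*y^4
      = ν^2 * Xq a0 a1 a2 a3 a4 y + y * GqQuotient ν a1 a2 a3 a4 y := by
    simp only [Xq, GqQuotient]
    ring
  have hrem : GqRemainder ν a0 a1 a3 a4 x y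
      = x^2 * GqQuotient ν a1 a2 a3 a4 y
        + y * (ν^2 * Xq a0 a1 a2 a3 a4 x
          + (a0 - 2*a0*ν - 2*a1*ν*x - a4*ν^2*x^4)) := by
    simp only [Xq, GqQuotient, GqRemainder]
    ring
  rw [Gq, hcoeff, hrem, Fq]
  ring

theorem GqRemainder_mul_sub_add_Hq_mul :
    GqRemainder ν a0 a1 a3 a4 x y * (x - y) + Hq ν a0 a1 a3 a4 x y * x
      = -((1 - ν)*(2*ν*x + (1 - ν)*y)) * FqCofactor a0 a1 a3 a4 x y := by
  simp only [GqRemainder, Hq, FqCofactor]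
  ring

variable {a0 a1 a2 a3 a4 x y}

theorem Gq_div_add_Hq_div_eq_partialFractions (hF : Fq a0 a1 a2 a3 a4 x y ≠ 0) (hxy : x ≠ y)
    (hY : Xq a0 a1 a2 a3 a4 y ≠ 0) :
    Gq ν a0 a1 a2 a3 a4 x y * y / (Fq a0 a1 a2 a3 a4 x y * Xq a0 a1 a2 a3 a4 y)
        + Hq ν a0 a1 a3 a4 x y * x / (Fq a0 a1 a2 a3 a4 x y * (x - y))
      = (1 - ν) * ((2*ν*x + (1 - ν)*y) / (x - y)^2)
        + GqQuotient ν a1 a2 a3 a4 y / Xq a0 a1 a2 a3 a4 y := by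
  have hsub : x - y ≠ 0 := sub_ne_zero.mpr hxy
  have hpole : (GqRemainder ν a0 a1 a3 a4 x y * (x - y) + Hq ν a0 a1 a3 a4 x y * x)
        / (Fq a0 a1 a2 a3 a4 x y * (x - y))
      = (1 - ν) * ((2*ν*x + (1 - ν)*y) / (x - y)^2) := by
    rw [← mul_div_assoc, div_eq_div_iff (mul_ne_zero hF hsub) (pow_ne_zero 2 hsub),
      GqRemainder_mul_sub_add_Hq_mul, Fq_eq_sub_mul_cofactor]
    ring
  rw [← hpole, Gq_mul_eq_quotient_add_remainder]
  field_simp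
  ring

end ChenTeo

theorem continuous_Fq_left (a0 a1 a2 a3 a4 y : ℝ) :
    Continuous fun t : ℝ => Fq a0 a1 a2 a3 a4 t y := by
  unfold Fq Xq
  fun_prop

theorem hasDerivAt_linear_div_sub_sq {𝕜 : Type*} [NontriviallyNormedField 𝕜] (b c : 𝕜) {x y : 𝕜}
    (hxy : x ≠ y) :
    HasDerivAt (fun t : 𝕜 => (b*t + c) / (t - y)^2) (-(b*(x + y) + 2*c) / (x - y)^3) x := by
  have hsub : x - y ≠ 0 := sub_ne_zero.mpr hxy
  have hnum : HasDerivAt (fun t : 𝕜 => b*t + c) b x := by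
    simpa using ((hasDerivAt_id x).const_mul b).add_const c
  have hden : HasDerivAt (fun t : 𝕜 => (t - y)^2) (2*(x - y)) x := by
    simpa using ((hasDerivAt_id x).sub_const y).fun_pow 2
  refine (hnum.fun_div hden (pow_ne_zero 2 hsub)).congr_deriv ?_
  field_simp
  ring

theorem chenTeo_dx_identity (ν a0 a1 a2 a3 a4 x y : ℝ)
    (hF : Fq a0 a1 a2 a3 a4 x y ≠ 0) (hxy : x ≠ y)
    (hY : Xq a0 a1 a2 a3 a4 y ≠ 0) :
    HasDerivAt (fun t : ℝ =>
        Gq ν a0 a1 a2 a3 a4 t y * y / (Fq a0 a1 a2 a3 a4 t y * Xq a0 a1 a2 a3 a4 y)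
          + Hq ν a0 a1 a3 a4 t y * t / (Fq a0 a1 a2 a3 a4 t y * (t - y)))
      (-2*(1 - ν)*(ν*x + y)/(x - y)^3) x := by
  have hpole : HasDerivAt (fun t : ℝ => (1 - ν) * ((2*ν*t + (1 - ν)*y) / (t - y)^2))
      (-2*(1 - ν)*(ν*x + y)/(x - y)^3) x :=
    ((hasDerivAt_linear_div_sub_sq (2*ν) ((1 - ν)*y) hxy).const_mul (1 - ν)).congr_deriv (by ring)
  refine (hpole.add_const
    (GqQuotient ν a1 a2 a3 a4 y / Xq a0 a1 a2 a3 a4 y)).congr_of_eventuallyEq ?_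
  filter_upwards [(continuous_Fq_left a0 a1 a2 a3 a4 y).continuousAt.eventually_ne hF,
    eventually_ne_nhds hxy] with t hFt hty
  exact Gq_div_add_Hq_div_eq_partialFractions ν hFt hty hY
end

section
/- Let ν ∈ (-1, -1/2) and x1 < x2 = -1 < x3 < 0 with x1 < -1. Define H̃2(x) = -H(x, x1)/(νx + x1) where H(x,y) = (νx+y)((νx-y)(a1 - a3xy) - 2(1-ν)(a0 - a4x²y²)) with coefficients a0,...,a4 given by Vieta's formulas for roots x1, x2, x3, x4=0 and a4 = 1. Then H̃2 is concave in x on [x2, x3] (its second derivative equals 2x1(-2x1 + ν(1 + x1 - x3)) < 0), and H̃2(-1) = (ν - x1)x1(1 + x1) > 0 and H̃2(x3) = x1(x1 - x3)x3(x1 + νx3) > 0; hence H̃2 > 0 on [x2, x3]. -/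
/-!
The second derivative of `H̃2` is the constant `2 x1 (-2 x1 + ν (1 + x1 - x3))`. The last factor is
affine in `ν`, and it is positive at `ν = -1` and `ν = 2`, hence in between. A concave function is
bounded below between two points by the smaller of its values there, and the values of `H̃2` at
`-1` and `x3` factor into terms of known sign.
-/

section Quadratic

variable {𝕜 : Type*} [NontriviallyNormedField 𝕜]

theorem deriv_quadratic (a b c : 𝕜) :
    deriv (fun x => a * x ^ 2 + b * x + c) = fun x => 2 * a * x + b := by
  funext x
  have h := (((hasDerivAt_pow 2 x).const_mul a).add (hasDerivAt_const_mul b)).add_const c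
  refine (h.congr_deriv ?_).deriv
  push_cast
  ring

theorem deriv_deriv_quadratic (a b c x : 𝕜) :
    deriv (deriv fun x => a * x ^ 2 + b * x + c) x = 2 * a := by
  rw [deriv_quadratic]
  exact ((hasDerivAt_const_mul (2 * a)).add_const b).deriv

theorem concaveOn_quadratic {a : ℝ} (ha : a ≤ 0) (b c : ℝ) :
    ConcaveOn ℝ Set.univ fun x => a * x ^ 2 + b * x + c := by
  refine concaveOn_univ_of_deriv2_nonpos (by fun_prop) ?_ fun x => ?_
  · rw [deriv_quadratic]
    fun_prop
  · change deriv (deriv fun x => a * x ^ 2 + b * x + c) x ≤ 0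
    rw [deriv_deriv_quadratic]
    linarith

end Quadratic

/-- The function `H̃2(x) = -H(x, x1) / (νx + x1)` of the Chen-Teo instanton, with the factor
`νx + x1` cancelled, so that it is a polynomial also where `νx + x1 = 0`. The Vieta coefficients
for the roots `x1, -1, x3, 0` are substituted: `a0 = 0`, `a1 = x1 x3`, `a3 = 1 - x1 - x3`,
`a4 = 1`. -/
def chenTeoTildeH2 (ν x1 x3 x : ℝ) : ℝ :=
  -((ν * x - x1) * (x1 * x3 - (1 - x1 - x3) * x * x1) + 2 * (1 - ν) * (x ^ 2 * x1 ^ 2))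

section ChenTeo

variable {ν x1 x3 : ℝ}

theorem chenTeoTildeH2_eq_quadratic (ν x1 x3 : ℝ) :
    chenTeoTildeH2 ν x1 x3 = fun x => x1 * (-2 * x1 + ν * (1 + x1 - x3)) * x ^ 2
      + -(ν * x1 * x3 + x1 ^ 2 * (1 - x1 - x3)) * x + x1 ^ 2 * x3 := by
  funext x
  rw [chenTeoTildeH2]
  ring

theorem deriv_deriv_chenTeoTildeH2 (ν x1 x3 x : ℝ) :
    deriv (deriv (chenTeoTildeH2 ν x1 x3)) x = 2 * x1 * (-2 * x1 + ν * (1 + x1 - x3)) := by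
  rw [chenTeoTildeH2_eq_quadratic, deriv_deriv_quadratic, mul_assoc]

theorem chenTeoTildeH2_neg_one (ν x1 x3 : ℝ) :
    chenTeoTildeH2 ν x1 x3 (-1) = (ν - x1) * x1 * (1 + x1) := by
  rw [chenTeoTildeH2]
  ring

theorem chenTeoTildeH2_x3 (ν x1 x3 : ℝ) :
    chenTeoTildeH2 ν x1 x3 x3 = x1 * (x1 - x3) * x3 * (x1 + ν * x3) := by
  rw [chenTeoTildeH2]
  ring

theorem chenTeoTildeH2_leadingCoeff_neg (hν : ν ∈ Set.Icc (-1) 2) (hx1 : x1 < -1)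
    (hx13 : x1 < x3) (hx3 : x3 < 0) : x1 * (-2 * x1 + ν * (1 + x1 - x3)) < 0 := by
  obtain ⟨hν_lower, hν_upper⟩ := hν
  have at_neg_one : 0 < -2 * x1 + -1 * (1 + x1 - x3) := by linarith
  have at_two : 0 < -2 * x1 + 2 * (1 + x1 - x3) := by linarith
  have interpolation : 3 * (-2 * x1 + ν * (1 + x1 - x3)) =
      (2 - ν) * (-2 * x1 + -1 * (1 + x1 - x3)) + (ν + 1) * (-2 * x1 + 2 * (1 + x1 - x3)) := by
    ring
  have factor_pos : 0 < -2 * x1 + ν * (1 + x1 - x3) := by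
    rcases hν_lower.eq_or_lt with rfl | hν_lower
    · exact at_neg_one
    · have h_left := mul_nonneg (sub_nonneg.2 hν_upper) at_neg_one.le
      have h_right := mul_pos (neg_lt_iff_pos_add.1 hν_lower) at_two
      linarith
  exact mul_neg_of_neg_of_pos (by linarith) factor_pos

theorem concaveOn_chenTeoTildeH2 (h : x1 * (-2 * x1 + ν * (1 + x1 - x3)) ≤ 0) :
    ConcaveOn ℝ Set.univ (chenTeoTildeH2 ν x1 x3) := by
  rw [chenTeoTildeH2_eq_quadratic]
  exact concaveOn_quadratic h _ _

theorem chenTeoTildeH2_neg_one_pos (hν : -1 ≤ ν) (hx1 : x1 < -1) :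
    0 < chenTeoTildeH2 ν x1 x3 (-1) := by
  rw [chenTeoTildeH2_neg_one]
  exact mul_pos_of_neg_of_neg
    (mul_neg_of_pos_of_neg (by linarith) (by linarith)) (by linarith)

theorem chenTeoTildeH2_x3_pos (hν : -1 ≤ ν) (hx13 : x1 < x3) (hx3 : x3 < 0) :
    0 < chenTeoTildeH2 ν x1 x3 x3 := by
  have hx1 : x1 < 0 := hx13.trans hx3
  have h_diff : x1 - x3 < 0 := sub_neg.2 hx13
  have h_factor : x1 + ν * x3 < 0 := by
    have : ν * x3 ≤ -1 * x3 := mul_le_mul_of_nonpos_right hν hx3.le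
    linarith
  rw [chenTeoTildeH2_x3]
  exact mul_pos_of_neg_of_neg
    (mul_neg_of_pos_of_neg (mul_pos_of_neg_of_neg hx1 h_diff) hx3) h_factor

theorem chenTeo_rod2_positivity_general (hν : ν ∈ Set.Icc (-1) 2) (hx1 : x1 < -1)
    (hx13 : x1 < x3) (hx3 : x3 < 0) :
    ((∀ x, deriv (deriv (chenTeoTildeH2 ν x1 x3)) x = 2 * x1 * (-2 * x1 + ν * (1 + x1 - x3)))
      ∧ 2 * x1 * (-2 * x1 + ν * (1 + x1 - x3)) < 0)
    ∧ (chenTeoTildeH2 ν x1 x3 (-1) = (ν - x1) * x1 * (1 + x1)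
      ∧ 0 < chenTeoTildeH2 ν x1 x3 (-1))
    ∧ (chenTeoTildeH2 ν x1 x3 x3 = x1 * (x1 - x3) * x3 * (x1 + ν * x3)
      ∧ 0 < chenTeoTildeH2 ν x1 x3 x3)
    ∧ ∀ x ∈ Set.uIcc (-1) x3, 0 < chenTeoTildeH2 ν x1 x3 x := by
  have h_lead := chenTeoTildeH2_leadingCoeff_neg hν hx1 hx13 hx3
  have h_left : 0 < chenTeoTildeH2 ν x1 x3 (-1) := chenTeoTildeH2_neg_one_pos hν.1 hx1
  have h_right : 0 < chenTeoTildeH2 ν x1 x3 x3 := chenTeoTildeH2_x3_pos hν.1 hx13 hx3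
  refine ⟨⟨deriv_deriv_chenTeoTildeH2 ν x1 x3, by linarith⟩,
    ⟨chenTeoTildeH2_neg_one ν x1 x3, h_left⟩, ⟨chenTeoTildeH2_x3 ν x1 x3, h_right⟩,
    fun x hx => (lt_min h_left h_right).trans_le ?_⟩
  rw [← segment_eq_uIcc] at hx
  exact (concaveOn_chenTeoTildeH2 h_lead.le).min_le_of_mem_segment
    (Set.mem_univ _) (Set.mem_univ _) hx

end ChenTeo

/-- Positivity of `H̃2(x) = -H(x,x1)/(νx + x1)` on the rod `R2` of the Chen-Teo
instanton (with `x2 = -1`, `x4 = 0`, `a4 = 1`, and Vieta coefficients):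
`H̃2` is concave with the stated second derivative, positive at both endpoints
with the stated values, hence positive on `[x2, x3] = [-1, x3]`.
Since `H(x,y)` contains the factor `(νx + y)`, the quotient `H̃2` is the
polynomial `-((νx - x1)(a1 - a3 x x1) - 2(1-ν)(a0 - x² x1²))`. -/
theorem chenTeo_rod2_positivity (ν x1 x3 : ℝ)
    (hν : ν ∈ Set.Ioo (-1 : ℝ) (-1/2))
    (hx1 : x1 < -1) (hx3 : -1 < x3) (hx30 : x3 < 0) :
    -- Vieta coefficients for roots x1, x2 = -1, x3, x4 = 0 with a4 = 1
    ∀ a0 a1 a2 a3 : ℝ,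
      a0 = 1*x1*(-1)*x3*0 →
      a1 = -(x1*(-1)*x3 + x1*(-1)*0 + x1*x3*0 + (-1)*x3*0) →
      a2 = x1*(-1) + x1*x3 + (-1)*x3 + x1*0 + (-1)*0 + x3*0 →
      a3 = -(x1 + (-1) + x3 + 0) →
      ∀ tildeH2 : ℝ → ℝ,
        (∀ x : ℝ, tildeH2 x
          = -((ν*x - x1)*(a1 - a3*x*x1) - 2*(1 - ν)*(a0 - 1*x^2*x1^2))) →
        ((∀ x : ℝ, deriv (deriv tildeH2) x = 2*x1*(-2*x1 + ν*(1 + x1 - x3)))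
          ∧ 2*x1*(-2*x1 + ν*(1 + x1 - x3)) < 0)
        ∧ (tildeH2 (-1) = (ν - x1)*x1*(1 + x1) ∧ 0 < tildeH2 (-1))
        ∧ (tildeH2 x3 = x1*(x1 - x3)*x3*(x1 + ν*x3) ∧ 0 < tildeH2 x3)
        ∧ ∀ x ∈ Set.Icc (-1 : ℝ) x3, 0 < tildeH2 x := by
  intro a0 a1 a2 a3 h0 h1 _ h3 f hf
  obtain rfl : f = chenTeoTildeH2 ν x1 x3 := funext fun x => by
    rw [hf, h0, h1, h3, chenTeoTildeH2]
    ring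
  obtain ⟨h_deriv, h_left, h_right, h_pos⟩ := chenTeo_rod2_positivity_general
    ⟨hν.1.le, by linarith [hν.2]⟩ hx1 (hx1.trans hx3) hx30
  exact ⟨h_deriv, h_left, h_right, fun x hx => h_pos x (Set.Icc_subset_uIcc hx)⟩
end
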